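/- Suppose that every irreducible factor of the root system Φ is of type A_m, B_m, C_m, or D_m for some m (i.e., Φ contains no exceptional factor). Then there exists a sequence w_Δ = w_0, w_1, …, w_r = 1 in W such that for every 1 ≤ i ≤ r, either w_{i−1} <_∅ w_i in the weak left order, or w_i = u w_{i−1} for some u ∈ W_Ω. -/

import Mathlib

/-! Common framework: a reduced (crystallographic) root system `Φ` in a real vector
space `V`, with Weyl group `W` (generated by the reflections `s_α`, `α ∈ Φ`, inside the
group of linear automorphisms of `V`), a base `Δ` of simple roots with positive system
`Pos = Φ⁺`, and the associated combinatorics. -/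

open scoped Classical Pointwise

namespace PaperSp

variable {V : Type} [AddCommGroup V] [Module ℝ V]

/-- The data of a reduced crystallographic root system in `V`:  a finite spanning set
`Phi` of nonzero vectors together with, for each root `α`, a linear functional
`pairing α = ⟨·, α∨⟩` taking the value `2` at `α`, such that the associated reflections
`s_α : β ↦ β − ⟨β, α∨⟩α` preserve `Phi`, all pairings are integral, and the only
multiples of a root `α` which are roots are `±α`. -/
structure RootSystemData (V : Type) [AddCommGroup V] [Module ℝ V] : Type where
  Phi : Set V
  pairing : V → V →ₗ[ℝ] ℝ
  pairing_self : ∀ α, α ∈ Phi → pairing α α = 2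
  finite : Phi.Finite
  span_top : Submodule.span ℝ Phi = ⊤
  zero_not_mem : (0 : V) ∉ Phi
  crystallographic : ∀ α ∈ Phi, ∀ β ∈ Phi, ∃ n : ℤ, pairing α β = (n : ℝ)
  reduced : ∀ α ∈ Phi, ∀ t : ℝ, t • α ∈ Phi → t = 1 ∨ t = -1
  reflect_mem : ∀ α ∈ Phi, ∀ β ∈ Phi, β - pairing α β • α ∈ Phi

/-- The reflection `s_α` associated to a root `α` (the identity if `α ∉ Φ`). -/
noncomputable def RootSystemData.refl (R : RootSystemData V) (α : V) : V ≃ₗ[ℝ] V :=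
  if h : α ∈ R.Phi then Module.reflection (R.pairing_self α h) else 1

/-- The set of reflections `{s_α : α ∈ K}` associated to a set `K` of roots. -/
noncomputable def refls (R : RootSystemData V) (K : Set V) : Set (V ≃ₗ[ℝ] V) :=
  {s | ∃ α ∈ K, s = R.refl α}

/-- The Weyl group `W`, generated by all reflections `s_α`, `α ∈ Φ`. -/
noncomputable def weylGroup (R : RootSystemData V) : Subgroup (V ≃ₗ[ℝ] V) :=
  Subgroup.closure (refls R R.Phi)

/-- The subgroup `W_J` generated by the reflections `s_α`, `α ∈ J`. -/
noncomputable def WsubJ (R : RootSystemData V) (J : Set V) : Subgroup (V ≃ₗ[ℝ] V) :=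
  Subgroup.closure (refls R J)

/-- The word length of `w` with respect to a generating set `S` of a group. -/
noncomputable def lengthWrt {G : Type*} [Group G] (S : Set G) (w : G) : ℕ :=
  sInf {n | ∃ ls : List G, ls.length = n ∧ (∀ x ∈ ls, x ∈ S) ∧ ls.prod = w}

/-- The length function `ℓ` on `W` with respect to the simple reflections
`S = {s_α : α ∈ Δ}`. -/
noncomputable def len (R : RootSystemData V) (Δ : Set V) (w : V ≃ₗ[ℝ] V) : ℕ :=
  lengthWrt (refls R Δ) w

/-- `Pos` and `Δ` form a positive system with base `Δ` for the root system `R`: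
`Φ = Pos ⊔ (−Pos)`, `Δ ⊆ Pos` is linearly independent, and every positive root is a
nonnegative integral combination of simple roots. -/
structure IsBase (R : RootSystemData V) (Pos Δ : Set V) : Prop where
  pos_sub : Pos ⊆ R.Phi
  mem_or_neg : ∀ α ∈ R.Phi, α ∈ Pos ∨ -α ∈ Pos
  not_both : ∀ α : V, ¬(α ∈ Pos ∧ -α ∈ Pos)
  delta_sub : Δ ⊆ Pos
  indep : LinearIndependent ℝ (fun a : Δ => (a : V))
  decomp : ∀ β ∈ Pos, ∃ c : V →₀ ℕ, (c.support : Set V) ⊆ Δ ∧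
    β = c.sum (fun a m => (m : ℝ) • a)

/-- The set `W^J = {w ∈ W : w(α) ∈ Φ⁺ for all α ∈ J}` of minimal length representatives
of `W/W_J`. -/
noncomputable def WupJ (R : RootSystemData V) (Pos : Set V) (J : Set V) :
    Set (V ≃ₗ[ℝ] V) :=
  {w | w ∈ weylGroup R ∧ ∀ α ∈ J, w α ∈ Pos}

/-- The set `V^J = W^J \ ⋃_{α ∈ Δ\J} W^{J∪{α}}`. -/
noncomputable def VupJ (R : RootSystemData V) (Pos Δ : Set V) (J : Set V) :
    Set (V ≃ₗ[ℝ] V) :=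
  {w | w ∈ WupJ R Pos J ∧ ∀ α ∈ Δ, α ∉ J → w ∉ WupJ R Pos (J ∪ {α})}

/-- `Φ_J(1) = Φ⁻ \ (Φ⁻ ∩ W_J·J)`. -/
noncomputable def PhiJone (R : RootSystemData V) (Pos : Set V) (J : Set V) : Set V :=
  (R.Phi \ Pos) \ {β | ∃ v ∈ WsubJ R J, ∃ α ∈ J, β = v α}

/-- `Φ_J(w) = w · Φ_J(1)`. -/
noncomputable def PhiJ (R : RootSystemData V) (Pos : Set V) (J : Set V)
    (w : V ≃ₗ[ℝ] V) : Set V :=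
  (fun x => w x) '' (PhiJone R Pos J)

/-- `hProjJ R Pos J pJ` says that `pJ` is the projection `w ↦ (w)^J` sending an element
of `W` to the unique element of `W^J` in the coset `w W_J`. -/
noncomputable def IsProjJ (R : RootSystemData V) (Pos : Set V) (J : Set V)
    (pJ : (V ≃ₗ[ℝ] V) → (V ≃ₗ[ℝ] V)) : Prop :=
  ∀ w ∈ weylGroup R, pJ w ∈ WupJ R Pos J ∧ (pJ w)⁻¹ * w ∈ WsubJ R J

/-- The product `s_i ⋯ s_1` of the first `i` members of a sequence in a group. -/
noncomputable def chainProd {G : Type*} [Group G] (s : ℕ → G) (i : ℕ) : G :=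
  (((List.range' 1 i).map s).reverse).prod

/-- The chain `w^(0) = w`, `w^(i) = (s_i ⋯ s_1 w)^J` associated to `w` and a sequence
of simple reflections. -/
noncomputable def chainElt {G : Type*} [Group G] (pJ : G → G) (s : ℕ → G) (w : G)
    (i : ℕ) : G :=
  if i = 0 then w else pJ (chainProd s i * w)

/-- The partial order `<_J`:  `w <_J w'` iff there are simple reflections
`s_1, …, s_r` (`r ≥ 1`) such that, with `w^(i) = (s_i ⋯ s_1 w)^J`, the lengths
`ℓ(w^(i))` are strictly increasing and `w^(r) = w'`.  Taking `pJ = id`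
(and `J = ∅`) gives the weak left order `<_∅`. -/
noncomputable def ltJ {G : Type*} [Group G] (S : Set G) (ℓ : G → ℕ) (pJ : G → G)
    (w w' : G) : Prop :=
  ∃ r : ℕ, 1 ≤ r ∧ ∃ s : ℕ → G,
    (∀ m, 1 ≤ m → m ≤ r → s m ∈ S) ∧
    (∀ m, 1 ≤ m → m ≤ r → ℓ (chainElt pJ s w (m - 1)) < ℓ (chainElt pJ s w m)) ∧
    chainElt pJ s w r = w'

/-- `w` is the longest element of a subgroup `H` of `W` (with respect to `ℓ`). -/
noncomputable def IsLongestIn (R : RootSystemData V) (Δ : Set V)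
    (H : Subgroup (V ≃ₗ[ℝ] V)) (w : V ≃ₗ[ℝ] V) : Prop :=
  w ∈ H ∧ ∀ v ∈ H, len R Δ v ≤ len R Δ w

end PaperSp

namespace PaperSp

variable {V : Type} [AddCommGroup V] [Module ℝ V]

/-- `parts` is the decomposition of the set `Δ` of simple roots into the (mutually
orthogonal, connected) sets of simple roots of the irreducible factors of `Φ`. -/
structure IsFactorDecomp (R : RootSystemData V) (Δ : Set V) {ι : Type}
    (parts : ι → Set V) : Prop where
  union_eq : (⋃ c, parts c) = Δ
  disj : ∀ c c', c ≠ c' → Disjoint (parts c) (parts c')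
  nonempty : ∀ c, (parts c).Nonempty
  ortho : ∀ c c', c ≠ c' → ∀ a ∈ parts c, ∀ b ∈ parts c', R.pairing a b = 0
  irred : ∀ c, ∀ A B : Set V, A ∪ B = parts c → A.Nonempty → B.Nonempty →
    (∀ a ∈ A, ∀ b ∈ B, R.pairing a b = 0) → False

/-- The roots of the irreducible factor with simple roots `parts c`:  the roots that are
integral combinations of the simple roots in `parts c`. -/
noncomputable def PhiFactor (R : RootSystemData V) {ι : Type} (parts : ι → Set V)
    (c : ι) : Set V :=
  {β | β ∈ R.Phi ∧ ∃ q : V →₀ ℤ, (q.support : Set V) ⊆ parts c ∧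
    β = q.sum (fun a m => (m : ℝ) • a)}

/-- Standard basis vector of `ℝ^k`. -/
noncomputable def eVec {k : ℕ} (i : Fin k) : Fin k → ℝ := fun j => if j = i then 1 else 0

/-- The canonical pairing `⟨β, α∨⟩ = 2(α,β)/(α,α)` of the standard root systems in
Euclidean space. -/
noncomputable def pairStd {k : ℕ} (α β : Fin k → ℝ) : ℝ :=
  2 * (∑ i, α i * β i) / (∑ i, α i * α i)

/-- The root system of type `A_m`: `{e_i − e_j : i ≠ j} ⊆ ℝ^{m+1}`. -/
noncomputable def stdA (m : ℕ) : Set (Fin (m + 1) → ℝ) :=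
  {v | ∃ i j : Fin (m + 1), i ≠ j ∧ v = eVec i - eVec j}

/-- The root system of type `D_m`: `{±e_i ± e_j : i ≠ j} ⊆ ℝ^m`. -/
noncomputable def stdD (m : ℕ) : Set (Fin m → ℝ) :=
  {v | ∃ i j : Fin m, i ≠ j ∧
    (v = eVec i + eVec j ∨ v = eVec i - eVec j ∨
     v = -eVec i + eVec j ∨ v = -eVec i - eVec j)}

/-- The root system of type `B_m`: `{±e_i} ∪ {±e_i ± e_j : i ≠ j} ⊆ ℝ^m`. -/
noncomputable def stdB (m : ℕ) : Set (Fin m → ℝ) :=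
  stdD m ∪ {v | ∃ i : Fin m, v = eVec i ∨ v = -eVec i}

/-- The root system of type `C_m`: `{±2e_i} ∪ {±e_i ± e_j : i ≠ j} ⊆ ℝ^m`. -/
noncomputable def stdC (m : ℕ) : Set (Fin m → ℝ) :=
  stdD m ∪ {v | ∃ i : Fin m, v = (2 : ℝ) • eVec i ∨ v = -((2 : ℝ) • eVec i)}

/-- `Φc` is isomorphic, as a root system, to the standard root system `Ψ ⊆ ℝ^k`:
there is a bijection `Φc → Ψ` preserving the canonical pairings. -/
noncomputable def factorIso {k : ℕ} (R : RootSystemData V) (Φc : Set V)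
    (Ψ : Set (Fin k → ℝ)) : Prop :=
  ∃ φ : V → (Fin k → ℝ), Set.BijOn φ Φc Ψ ∧
    ∀ α ∈ Φc, ∀ β ∈ Φc, pairStd (φ α) (φ β) = R.pairing α β

/-- Every irreducible factor of `Φ` is of classical type `A`, `B`, `C` or `D`. -/
noncomputable def NoExceptionalFactor (R : RootSystemData V) {ι : Type}
    (parts : ι → Set V) : Prop :=
  ∀ c : ι,
    (∃ m : ℕ, factorIso R (PhiFactor R parts c) (stdA m)) ∨
    (∃ m : ℕ, factorIso R (PhiFactor R parts c) (stdB m)) ∨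
    (∃ m : ℕ, factorIso R (PhiFactor R parts c) (stdC m)) ∨
    (∃ m : ℕ, factorIso R (PhiFactor R parts c) (stdD m))

/-- `hr c` is the highest root of the irreducible factor `c` and `hco c` is the
(finitely supported) family of its coefficients over the simple roots `parts c`. -/
structure IsHighestRootData (R : RootSystemData V) (Pos : Set V) {ι : Type}
    (parts : ι → Set V) (hr : ι → V) (hco : ι → (V →₀ ℕ)) : Prop where
  mem_pos : ∀ c, hr c ∈ Pos
  mem_factor : ∀ c, hr c ∈ PhiFactor R parts c
  coeff_supp : ∀ c, (((hco c).support : Set V)) ⊆ parts c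
  coeff_eq : ∀ c, hr c = (hco c).sum (fun a m => (m : ℝ) • a)
  highest : ∀ c, ∀ β ∈ PhiFactor R parts c, ∃ q : V →₀ ℕ,
    (q.support : Set V) ⊆ parts c ∧ hr c - β = q.sum (fun a m => (m : ℝ) • a)

/-- The longest element of a subgroup `H` of the Weyl group (chosen by choice). -/
noncomputable def longestElt (R : RootSystemData V) (Δ : Set V)
    (H : Subgroup (V ≃ₗ[ℝ] V)) : V ≃ₗ[ℝ] V :=
  Classical.epsilon (fun w => IsLongestIn R Δ H w)

/-- The subset `W_Ω` of `W` attached to the irreducible factor `c`: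
`{1} ∪ {w_{Δ^(i)} w_Δc : the coefficient of α_i in the highest root of the factor is 1}`,
where `w_{Δ^(i)}` is the longest element of the subgroup generated by the simple
reflections of the factor other than `s_{α_i}`, and `w_{Δc}` is the longest element of
the Weyl group of the factor. -/
noncomputable def OmegaSet (R : RootSystemData V) (Δ : Set V) {ι : Type}
    (parts : ι → Set V) (hco : ι → (V →₀ ℕ)) (c : ι) : Set (V ≃ₗ[ℝ] V) :=
  {u | u = 1 ∨ ∃ a ∈ parts c, hco c a = 1 ∧
    u = longestElt R Δ (WsubJ R (parts c \ {a})) * longestElt R Δ (WsubJ R (parts c))}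

/-- The subgroup `W_Ω ⊆ W`: the product of the subgroups `W_Ω` of the irreducible
factors. -/
noncomputable def WOmega (R : RootSystemData V) (Δ : Set V) {ι : Type}
    (parts : ι → Set V) (hco : ι → (V →₀ ℕ)) : Subgroup (V ≃ₗ[ℝ] V) :=
  Subgroup.closure (⋃ c, OmegaSet R Δ parts hco c)

end PaperSp

namespace PaperSp

section Aux

variable {V : Type} [AddCommGroup V] [Module ℝ V]

theorem refl_apply' (R : RootSystemData V) {α : V} (h : α ∈ R.Phi) (x : V) :
    R.refl α x = x - R.pairing α x • α := by
  unfold RootSystemData.refl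
  rw [dif_pos h]
  exact Module.reflection_apply _ _

theorem refl_mul_self (R : RootSystemData V) {α : V} (h : α ∈ R.Phi) :
    R.refl α * R.refl α = 1 := by
  ext x
  rw [LinearEquiv.mul_apply, refl_apply' R h, refl_apply' R h]
  simp only [map_sub, map_smul, R.pairing_self α h, smul_eq_mul]
  change _ = x
  module

theorem refl_inv (R : RootSystemData V) {α : V} (h : α ∈ R.Phi) :
    (R.refl α)⁻¹ = R.refl α :=
  inv_eq_of_mul_eq_one_left (refl_mul_self R h)

theorem refl_refl (R : RootSystemData V) {α : V} (h : α ∈ R.Phi) (x : V) :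
    R.refl α (R.refl α x) = x := by
  rw [← LinearEquiv.mul_apply, refl_mul_self R h]; rfl

theorem refl_self (R : RootSystemData V) {α : V} (h : α ∈ R.Phi) :
    R.refl α α = -α := by
  rw [refl_apply' R h, R.pairing_self α h, two_smul]; abel

theorem refl_mem (R : RootSystemData V) {α β : V} (h : α ∈ R.Phi) (hb : β ∈ R.Phi) :
    R.refl α β ∈ R.Phi := by
  rw [refl_apply' R h]; exact R.reflect_mem α h β hb

theorem neg_mem_Phi (R : RootSystemData V) {α : V} (h : α ∈ R.Phi) : -α ∈ R.Phi := by
  rw [← refl_self R h]; exact refl_mem R h h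

theorem pairing_refl (R : RootSystemData V) {α β : V} (h : α ∈ R.Phi) (hb : β ∈ R.Phi)
    (x : V) : R.pairing (R.refl β α) x = R.pairing α (R.refl β x) := by
  have hγ := refl_mem R hb h
  have key : R.pairing (R.refl β α) = (R.pairing α).comp (R.refl β).toLinearMap := by
    refine Module.Dual.eq_of_preReflection_mapsTo (x := R.refl β α) R.finite R.span_top
      (R.pairing_self _ hγ) ?_ ?_ ?_
    · intro y hy
      rw [Module.preReflection_apply]
      exact R.reflect_mem _ hγ _ hy
    · change R.pairing α (R.refl β (R.refl β α)) = 2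
      rw [refl_refl R hb, R.pairing_self α h]
    · intro y hy
      rw [Module.preReflection_apply]
      have h1 := refl_mem R hb (refl_mem R h (refl_mem R hb hy))
      rw [refl_apply' R h, map_sub, refl_refl R hb, map_smul] at h1
      exact h1
  rw [key]; rfl

theorem refl_conj (R : RootSystemData V) {α β : V} (h : α ∈ R.Phi) (hb : β ∈ R.Phi) :
    R.refl β * R.refl (R.refl β α) = R.refl α * R.refl β := by
  ext x
  rw [LinearEquiv.mul_apply, LinearEquiv.mul_apply, refl_apply' R (refl_mem R hb h),
    refl_apply' R h, map_sub, map_smul, refl_refl R hb, pairing_refl R h hb]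

theorem weyl_mem (R : RootSystemData V) {g : V ≃ₗ[ℝ] V} (hg : g ∈ weylGroup R) :
    ∀ β ∈ R.Phi, g β ∈ R.Phi := by
  unfold weylGroup at hg
  induction hg using Subgroup.closure_induction_left with
  | one => intro β hβ; exact hβ
  | mul_left x hx y hy ih =>
    obtain ⟨a, ha, rfl⟩ := hx
    intro β hβ
    exact refl_mem R ha (ih β hβ)
  | inv_mul_cancel x hx y hy ih =>
    obtain ⟨a, ha, rfl⟩ := hx
    intro β hβ
    rw [refl_inv R ha]
    exact refl_mem R ha (ih β hβ)

theorem weyl_finite (R : RootSystemData V) : (weylGroup R : Set (V ≃ₗ[ℝ] V)).Finite := by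
  have : Finite R.Phi := R.finite
  let F : (weylGroup R) → (R.Phi → R.Phi) := fun g x => ⟨g.1 x.1, weyl_mem R g.2 _ x.2⟩
  have hF : Function.Injective F := by
    intro g h e
    apply Subtype.ext
    apply LinearEquiv.toLinearMap_injective
    apply LinearMap.ext_on R.span_top
    intro x hx
    have := congrFun e ⟨x, hx⟩
    exact congrArg Subtype.val this
  have := Finite.of_injective F hF
  exact Set.toFinite _

theorem eval_nat (f : V →ₗ[ℝ] ℝ) (c : V →₀ ℕ) :
    f (c.sum (fun a m => (m : ℝ) • a)) = ∑ a ∈ c.support, (c a : ℝ) * f a := by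
  simp [Finsupp.sum]

theorem eval_int (f : V →ₗ[ℝ] ℝ) (c : V →₀ ℤ) :
    f (c.sum (fun a m => (m : ℝ) • a)) = ∑ a ∈ c.support, (c a : ℝ) * f a := by
  simp [Finsupp.sum]

theorem exists_functional {R : RootSystemData V} {Pos Δ : Set V} (hB : IsBase R Pos Δ)
    (h : V → ℝ) : ∃ f : V →ₗ[ℝ] ℝ, ∀ a ∈ Δ, f a = h a := by
  have hi : LinearIndepOn ℝ id Δ := hB.indep
  let b := Module.Basis.extend hi
  refine ⟨b.constr ℝ (fun x => h x.1), fun a ha => ?_⟩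
  have h2 : a ∈ hi.extend (Set.subset_univ Δ) := hi.subset_extend _ ha
  have h3 : b ⟨a, h2⟩ = a := Module.Basis.extend_apply_self hi ⟨a, h2⟩
  have := b.constr_basis ℝ (fun x => h x.1) ⟨a, h2⟩
  rwa [h3] at this

theorem coef_nat {Δ : Set V} {f : V →ₗ[ℝ] ℝ} {a : V} (hf : ∀ b ∈ Δ, f b = if b = a then 1 else 0)
    (c : V →₀ ℕ) (hc : (c.support : Set V) ⊆ Δ) :
    f (c.sum (fun a m => (m : ℝ) • a)) = c a := by
  rw [eval_nat, Finset.sum_congr rfl (g := fun b => if b = a then (c b : ℝ) else 0)]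
  · rw [Finset.sum_ite_eq']
    split_ifs with h
    · rfl
    · rw [Finsupp.notMem_support_iff.1 h]; simp
  · intro b hb
    rw [hf b (hc hb)]; simp

theorem coef_int {Δ : Set V} {f : V →ₗ[ℝ] ℝ} {a : V} (hf : ∀ b ∈ Δ, f b = if b = a then 1 else 0)
    (c : V →₀ ℤ) (hc : (c.support : Set V) ⊆ Δ) :
    f (c.sum (fun a m => (m : ℝ) • a)) = c a := by
  rw [eval_int, Finset.sum_congr rfl (g := fun b => if b = a then (c b : ℝ) else 0)]
  · rw [Finset.sum_ite_eq']
    split_ifs with h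
    · rfl
    · rw [Finsupp.notMem_support_iff.1 h]; simp
  · intro b hb
    rw [hf b (hc hb)]; simp

theorem pos_nonneg {R : RootSystemData V} {Pos Δ : Set V} (hB : IsBase R Pos Δ)
    {f : V →ₗ[ℝ] ℝ} (hf : ∀ a ∈ Δ, 0 ≤ f a) {β : V} (hβ : β ∈ Pos) : 0 ≤ f β := by
  obtain ⟨c, hc, rfl⟩ := hB.decomp β hβ
  rw [eval_nat]
  exact Finset.sum_nonneg fun a ha => mul_nonneg (Nat.cast_nonneg _) (hf a (hc ha))

theorem pos_pos {R : RootSystemData V} {Pos Δ : Set V} (hB : IsBase R Pos Δ)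
    {f : V →ₗ[ℝ] ℝ} (hf : ∀ a ∈ Δ, 0 < f a) {β : V} (hβ : β ∈ Pos) : 0 < f β := by
  obtain ⟨c, hc, h⟩ := hB.decomp β hβ
  have hne : c.support.Nonempty := by
    rw [Finset.nonempty_iff_ne_empty]
    intro he
    have : c = 0 := by simpa using he
    subst this
    apply R.zero_not_mem
    have : β = 0 := by simpa using h
    rw [← this]; exact hB.pos_sub hβ
  rw [h, eval_nat]
  refine Finset.sum_pos (fun a ha => ?_) hne
  have : 0 < c a := Nat.pos_of_ne_zero (by simpa using ha)
  exact mul_pos (by exact_mod_cast this) (hf a (hc ha))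

theorem simple_mem {R : RootSystemData V} {Pos Δ : Set V} (hB : IsBase R Pos Δ) {a : V}
    (ha : a ∈ Δ) : a ∈ R.Phi := hB.pos_sub (hB.delta_sub ha)

theorem simple_refl_pos {R : RootSystemData V} {Pos Δ : Set V} (hB : IsBase R Pos Δ)
    {a β : V} (ha : a ∈ Δ) (hβ : β ∈ Pos) (hne : β ≠ a) : R.refl a β ∈ Pos := by
  have haP := simple_mem hB ha
  rcases hB.mem_or_neg _ (refl_mem R haP (hB.pos_sub hβ)) with h | h
  · exact h
  exfalso
  obtain ⟨c, hc, hβc⟩ := hB.decomp β hβ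
  have h0 : ∀ b, b ≠ a → c b = 0 := by
    intro b hba
    obtain ⟨f, hf⟩ := exists_functional hB (fun x => if x = b then 1 else 0)
    have h1 : f β = c b := by rw [hβc]; exact coef_nat hf c hc
    have h2 : 0 ≤ f (-(R.refl a β)) := pos_nonneg hB (fun x hx => by
      rw [hf x hx]; split_ifs <;> norm_num) h
    rw [refl_apply' R haP, map_neg, map_sub, map_smul, hf a ha, if_neg hba.symm, h1] at h2
    simp only [smul_zero, sub_zero] at h2
    have h3 : (c b : ℝ) ≤ 0 := by linarith
    have h4 : c b ≤ 0 := by exact_mod_cast h3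
    omega
  have h5 : β = (c a : ℝ) • a := by
    rw [hβc]
    refine Finsupp.sum_eq_single a ?_ ?_
    · intro b _ hb; simp [h0 b hb]
    · simp
  have h6 := R.reduced a haP (c a) (by rw [← h5]; exact hB.pos_sub hβ)
  rcases h6 with h6 | h6
  · rw [h6, one_smul] at h5; exact hne h5
  · have : (0 : ℝ) ≤ c a := Nat.cast_nonneg _
    linarith

theorem exchange {R : RootSystemData V} {Pos Δ : Set V} (hB : IsBase R Pos Δ)
    (ls : List (V ≃ₗ[ℝ] V)) : (∀ x ∈ ls, x ∈ refls R Δ) → ∀ β ∈ Pos,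
    -(ls.prod⁻¹ β) ∈ Pos → ∃ ls' : List (V ≃ₗ[ℝ] V), ls'.length + 1 = ls.length ∧
      (∀ x ∈ ls', x ∈ refls R Δ) ∧ ls'.prod = R.refl β * ls.prod := by
  induction ls with
  | nil =>
    intro _ β hβ h
    exact absurd ⟨hβ, by simpa using h⟩ (hB.not_both β)
  | cons s t ih =>
    intro hls β hβ h
    obtain ⟨b, hb, rfl⟩ := hls s (by simp)
    have hbP := simple_mem hB hb
    have ht : ∀ x ∈ t, x ∈ refls R Δ := fun x hx => hls x (by simp [hx])
    by_cases hβb : β = b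
    · subst hβb
      exact ⟨t, by simp, ht, by rw [List.prod_cons, ← mul_assoc, refl_mul_self R hbP, one_mul]⟩
    · obtain ⟨t', h1, h2, h3⟩ := ih ht (R.refl b β) (simple_refl_pos hB hb hβ hβb) (by
        rw [List.prod_cons, mul_inv_rev, refl_inv R hbP] at h
        exact h)
      refine ⟨R.refl b :: t', by simp [h1], ?_, ?_⟩
      · intro x hx
        rcases List.mem_cons.1 hx with rfl | hx
        · exact ⟨b, hb, rfl⟩
        · exact h2 x hx
      · rw [List.prod_cons, List.prod_cons, h3, ← mul_assoc, ← mul_assoc,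
          refl_conj R (hB.pos_sub hβ) hbP]

theorem exists_word {R : RootSystemData V} {Pos Δ : Set V} (hB : IsBase R Pos Δ)
    {w : V ≃ₗ[ℝ] V} (hw : w ∈ WsubJ R Δ) :
    ∃ ls : List (V ≃ₗ[ℝ] V), (∀ x ∈ ls, x ∈ refls R Δ) ∧ ls.prod = w := by
  unfold WsubJ at hw
  have key : ∀ a ∈ Δ, ∀ y : V ≃ₗ[ℝ] V,
      (∃ ls : List (V ≃ₗ[ℝ] V), (∀ x ∈ ls, x ∈ refls R Δ) ∧ ls.prod = y) →
      (∃ ls : List (V ≃ₗ[ℝ] V), (∀ x ∈ ls, x ∈ refls R Δ) ∧ ls.prod = R.refl a * y) := by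
    rintro a ha y ⟨ls, h1, h2⟩
    refine ⟨R.refl a :: ls, ?_, by simp [h2]⟩
    intro x hx
    rcases List.mem_cons.1 hx with rfl | hx
    · exact ⟨a, ha, rfl⟩
    · exact h1 x hx
  induction hw using Subgroup.closure_induction_left with
  | one => exact ⟨[], by simp, rfl⟩
  | mul_left x hx y hy ih =>
    obtain ⟨a, ha, rfl⟩ := hx
    exact key a ha y ih
  | inv_mul_cancel x hx y hy ih =>
    obtain ⟨a, ha, rfl⟩ := hx
    rw [refl_inv R (simple_mem hB ha)]
    exact key a ha y ih

theorem len_lt_of_neg {R : RootSystemData V} {Pos Δ : Set V} (hB : IsBase R Pos Δ)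
    {w : V ≃ₗ[ℝ] V} (hw : w ∈ WsubJ R Δ) {β : V} (hβ : β ∈ Pos) (h : -(w⁻¹ β) ∈ Pos) :
    len R Δ (R.refl β * w) < len R Δ w := by
  have hne : {n | ∃ ls : List (V ≃ₗ[ℝ] V), ls.length = n ∧ (∀ x ∈ ls, x ∈ refls R Δ) ∧
      ls.prod = w}.Nonempty := by
    obtain ⟨ls, h1, h2⟩ := exists_word hB hw
    exact ⟨_, ls, rfl, h1, h2⟩
  obtain ⟨ls, h1, h2, h3⟩ := Nat.sInf_mem hne
  subst h3
  obtain ⟨ls', h4, h5, h6⟩ := exchange hB ls h2 β hβ h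
  have h7 : len R Δ (R.refl β * ls.prod) ≤ ls'.length := Nat.sInf_le ⟨ls', rfl, h5, h6⟩
  have h8 : len R Δ ls.prod = ls.length := h1.symm
  omega

theorem Wsub_mono {R : RootSystemData V} {J K : Set V} (h : J ⊆ K) : WsubJ R J ≤ WsubJ R K := by
  apply Subgroup.closure_mono
  rintro x ⟨a, ha, rfl⟩
  exact ⟨a, h ha, rfl⟩

theorem refl_mem_Wsub {R : RootSystemData V} {J : Set V} {a : V} (ha : a ∈ J) :
    R.refl a ∈ WsubJ R J := Subgroup.subset_closure ⟨a, ha, rfl⟩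

theorem len_lt_of_pos {R : RootSystemData V} {Pos Δ : Set V} (hB : IsBase R Pos Δ)
    {w : V ≃ₗ[ℝ] V} (hw : w ∈ WsubJ R Δ) {a : V} (ha : a ∈ Δ) (h : w⁻¹ a ∈ Pos) :
    len R Δ w < len R Δ (R.refl a * w) := by
  have haP := simple_mem hB ha
  have h1 := len_lt_of_neg hB (mul_mem (refl_mem_Wsub ha) hw) (hB.delta_sub ha) (by
    rw [mul_inv_rev, refl_inv R haP, LinearEquiv.mul_apply, refl_self R haP, map_neg, neg_neg]
    exact h)
  rwa [← mul_assoc, refl_mul_self R haP, one_mul] at h1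

theorem Wsub_le_weyl {R : RootSystemData V} {Pos Δ : Set V} (hB : IsBase R Pos Δ) {J : Set V}
    (hJ : J ⊆ Δ) : WsubJ R J ≤ weylGroup R :=
  Wsub_mono (fun _ h => simple_mem hB (hJ h))

theorem longest_spec {R : RootSystemData V} {Pos Δ : Set V} (hB : IsBase R Pos Δ) {J : Set V}
    (hJ : J ⊆ Δ) : IsLongestIn R Δ (WsubJ R J) (longestElt R Δ (WsubJ R J)) := by
  have hfin : (WsubJ R J : Set (V ≃ₗ[ℝ] V)).Finite :=
    (weyl_finite R).subset (Wsub_le_weyl hB hJ)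
  obtain ⟨w, hw, hm⟩ := Set.exists_max_image _ (len R Δ) hfin ⟨1, one_mem _⟩
  exact Classical.epsilon_spec (p := fun w => IsLongestIn R Δ (WsubJ R J) w) ⟨w, hw, hm⟩

theorem longest_neg {R : RootSystemData V} {Pos Δ : Set V} (hB : IsBase R Pos Δ) {J : Set V}
    (hJ : J ⊆ Δ) {w : V ≃ₗ[ℝ] V} (hw : IsLongestIn R Δ (WsubJ R J) w) {a : V} (ha : a ∈ J) :
    -(w⁻¹ a) ∈ Pos := by
  rcases hB.mem_or_neg _ (weyl_mem R (inv_mem (Wsub_le_weyl hB hJ hw.1)) a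
    (simple_mem hB (hJ ha))) with h | h
  · have h1 := len_lt_of_pos hB (Wsub_mono hJ hw.1) (hJ ha) h
    have h2 := hw.2 _ (mul_mem (refl_mem_Wsub ha) hw.1)
    omega
  · exact h

theorem parts_sub {R : RootSystemData V} {Δ : Set V} {ι : Type} {parts : ι → Set V}
    (hp : IsFactorDecomp R Δ parts) (c : ι) : parts c ⊆ Δ := by
  rw [← hp.union_eq]; exact Set.subset_iUnion parts c

theorem simple_mem_factor {R : RootSystemData V} {Pos Δ : Set V} (hB : IsBase R Pos Δ)
    {ι : Type} {parts : ι → Set V} (hp : IsFactorDecomp R Δ parts) {c : ι} {a : V}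
    (ha : a ∈ parts c) : a ∈ PhiFactor R parts c := by
  refine ⟨simple_mem hB (parts_sub hp c ha), Finsupp.single a 1, ?_, ?_⟩
  · intro x hx
    have : x = a := by simpa using hx
    rwa [this]
  · simp

theorem refl_mem_factor {R : RootSystemData V} {Pos Δ : Set V} (hB : IsBase R Pos Δ)
    {ι : Type} {parts : ι → Set V} (hp : IsFactorDecomp R Δ parts) {c : ι} {a β : V}
    (ha : a ∈ parts c) (hβ : β ∈ PhiFactor R parts c) : R.refl a β ∈ PhiFactor R parts c := by
  have haP := simple_mem hB (parts_sub hp c ha)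
  obtain ⟨h1, q, hq, h2⟩ := hβ
  refine ⟨refl_mem R haP h1, ?_⟩
  obtain ⟨n, hn⟩ := R.crystallographic a haP β h1
  refine ⟨q - Finsupp.single a n, ?_, ?_⟩
  · intro x hx
    by_cases h : x = a
    · rwa [h]
    · apply hq
      simpa [Finsupp.single_apply, Ne.symm h] using hx
  · rw [refl_apply' R haP, hn, Finsupp.sum_sub_index, ← h2]
    · simp
    · intro x b1 b2; push_cast; rw [sub_smul]

theorem coef_pos {R : RootSystemData V} {Pos Δ : Set V} (hB : IsBase R Pos Δ)
    {ι : Type} {parts : ι → Set V} (hp : IsFactorDecomp R Δ parts)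
    {hr : ι → V} {hco : ι → (V →₀ ℕ)} (hhr : IsHighestRootData R Pos parts hr hco)
    {c : ι} {a : V} (ha : a ∈ parts c) : 1 ≤ hco c a := by
  obtain ⟨q, hq, h⟩ := hhr.highest c a (simple_mem_factor hB hp ha)
  obtain ⟨f, hf⟩ := exists_functional hB (fun x => if x = a then 1 else 0)
  have h1 := congrArg f h
  rw [map_sub, hhr.coeff_eq c, coef_nat hf _ ((hhr.coeff_supp c).trans (parts_sub hp c)),
    coef_nat hf _ (hq.trans (parts_sub hp c)), hf a (parts_sub hp c ha), if_pos rfl] at h1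
  have h2 : (1 : ℝ) ≤ hco c a := by
    have : (0 : ℝ) ≤ q a := Nat.cast_nonneg _
    linarith
  exact_mod_cast h2

/-- A functional taking only the values `-1, 0, 1` on the factor, and not vanishing on it. -/
def Minu (R : RootSystemData V) {ι : Type} (parts : ι → Set V) (c : ι) (f : V →ₗ[ℝ] ℝ) : Prop :=
  (∀ β ∈ PhiFactor R parts c, f β = -1 ∨ f β = 0 ∨ f β = 1) ∧
    ∃ β ∈ PhiFactor R parts c, f β ≠ 0

theorem minu_dominant {R : RootSystemData V} {Pos Δ : Set V} (hB : IsBase R Pos Δ)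
    {ι : Type} {parts : ι → Set V} (hp : IsFactorDecomp R Δ parts) {c : ι} (n : ℕ) :
    ∀ f : V →ₗ[ℝ] ℝ, Minu R parts c f → {β | β ∈ Pos ∧ f β < 0}.ncard = n →
    ∃ f' : V →ₗ[ℝ] ℝ, Minu R parts c f' ∧ ∀ a ∈ parts c, 0 ≤ f' a := by
  induction n using Nat.strong_induction_on with
  | _ n ih =>
    intro f hf hn
    by_cases hd : ∀ a ∈ parts c, 0 ≤ f a
    · exact ⟨f, hf, hd⟩
    push Not at hd
    obtain ⟨a, ha, hfa⟩ := hd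
    have haD := parts_sub hp c ha
    have haP := simple_mem hB haD
    have hfin : {β | β ∈ Pos ∧ f β < 0}.Finite :=
      R.finite.subset (fun β h => hB.pos_sub h.1)
    have hlt : {β | β ∈ Pos ∧ (f.comp (R.refl a).toLinearMap) β < 0}.ncard < n := by
      rw [← hn, ← Set.ncard_image_of_injective _ (R.refl a).injective]
      apply Set.ncard_lt_ncard _ hfin
      have hsub : ∀ β, β ∈ Pos → f (R.refl a β) < 0 → β ≠ a := by
        rintro β hβ h rfl
        rw [refl_self R haP, map_neg] at h
        linarith
      refine ⟨?_, ?_⟩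
      · rintro _ ⟨β, ⟨h1, h2⟩, rfl⟩
        exact ⟨simple_refl_pos hB haD h1 (hsub β h1 h2), h2⟩
      · intro h
        obtain ⟨β, ⟨h1, h2⟩, h3⟩ := h (show a ∈ _ from ⟨hB.delta_sub haD, hfa⟩)
        have h4 := refl_refl R haP β
        have h5 : R.refl a β = a := h3
        rw [h5, refl_self R haP] at h4
        exact hB.not_both a ⟨hB.delta_sub haD, h4 ▸ h1⟩
    refine ih _ hlt _ ⟨?_, ?_⟩ rfl
    · intro β hβ
      exact hf.1 _ (refl_mem_factor hB hp ha hβ)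
    · obtain ⟨β, hβ, h⟩ := hf.2
      refine ⟨_, refl_mem_factor hB hp ha hβ, ?_⟩
      change f (R.refl a (R.refl a β)) ≠ 0
      rwa [refl_refl R haP]

theorem exists_coef_one {R : RootSystemData V} {Pos Δ : Set V} (hB : IsBase R Pos Δ)
    {ι : Type} {parts : ι → Set V} (hp : IsFactorDecomp R Δ parts)
    {hr : ι → V} {hco : ι → (V →₀ ℕ)} (hhr : IsHighestRootData R Pos parts hr hco)
    {c : ι} {f : V →ₗ[ℝ] ℝ} (hf : Minu R parts c f) : ∃ a ∈ parts c, hco c a = 1 := by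
  obtain ⟨f, hf, hd⟩ := minu_dominant hB hp _ f hf rfl
  have : ∃ a ∈ parts c, f a ≠ 0 := by
    by_contra! h
    obtain ⟨β, ⟨_, q, hq, hβ⟩, hne⟩ := hf.2
    apply hne
    rw [hβ, eval_int]
    exact Finset.sum_eq_zero fun a ha => by rw [h a (hq ha), mul_zero]
  obtain ⟨a, ha, hne⟩ := this
  have h1 : f a = 1 := by
    rcases hf.1 a (simple_mem_factor hB hp ha) with h | h | h
    · have := hd a ha; linarith
    · exact absurd h hne
    · exact h
  refine ⟨a, ha, le_antisymm ?_ (coef_pos hB hp hhr ha)⟩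
  have h2 : f (hr c) ≤ 1 := by
    rcases hf.1 _ (hhr.mem_factor c) with h | h | h <;> rw [h] <;> norm_num
  rw [hhr.coeff_eq c, eval_nat] at h2
  have h3 : (hco c a : ℝ) * f a ≤ ∑ a ∈ (hco c).support, (hco c a : ℝ) * f a := by
    refine Finset.single_le_sum (f := fun a => (hco c a : ℝ) * f a) (fun b hb => ?_) ?_
    · exact mul_nonneg (Nat.cast_nonneg _) (hd b (hhr.coeff_supp c hb))
    · have := coef_pos hB hp hhr ha
      rw [Finsupp.mem_support_iff]; omega
  rw [h1, mul_one] at h3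
  exact_mod_cast h3.trans h2

theorem sum_eVec_mul {k : ℕ} (i : Fin k) (x : Fin k → ℝ) : ∑ j, eVec i j * x j = x i := by
  simp [eVec]

theorem sum_eVec {k : ℕ} (i : Fin k) : ∑ j, eVec i j = 1 := by
  simp [eVec]

theorem eVec_self {k : ℕ} (i : Fin k) : eVec i i = 1 := by simp [eVec]

theorem eVec_ne {k : ℕ} {i j : Fin k} (h : i ≠ j) : eVec i j = 0 := by simp [eVec, h.symm]

theorem eVec_cases {k : ℕ} (i j : Fin k) : (i = j ∧ eVec i j = 1) ∨ (i ≠ j ∧ eVec i j = 0) := by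
  by_cases h : i = j
  · subst h; exact Or.inl ⟨rfl, eVec_self i⟩
  · exact Or.inr ⟨h, eVec_ne h⟩

theorem pair_sub {k : ℕ} {i j : Fin k} (h : i ≠ j) (x : Fin k → ℝ) :
    pairStd (eVec i - eVec j) x = x i - x j := by
  have : ∀ y : Fin k → ℝ, ∑ l, (eVec i - eVec j) l * y l = y i - y j := by
    intro y
    simp only [Pi.sub_apply, sub_mul, Finset.sum_sub_distrib, sum_eVec_mul]
  rw [pairStd, this, this]
  simp only [Pi.sub_apply, eVec_self, eVec_ne h, eVec_ne h.symm]
  ring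

theorem pair_add {k : ℕ} {i j : Fin k} (h : i ≠ j) (x : Fin k → ℝ) :
    pairStd (eVec i + eVec j) x = x i + x j := by
  have : ∀ y : Fin k → ℝ, ∑ l, (eVec i + eVec j) l * y l = y i + y j := by
    intro y
    simp only [Pi.add_apply, add_mul, Finset.sum_add_distrib, sum_eVec_mul]
  rw [pairStd, this, this]
  simp only [Pi.add_apply, eVec_self, eVec_ne h, eVec_ne h.symm]
  ring

theorem pair_one {k : ℕ} (i : Fin k) (x : Fin k → ℝ) : pairStd (eVec i) x = 2 * x i := by
  rw [pairStd, sum_eVec_mul, sum_eVec_mul, eVec_self]; ring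

theorem pair_two {k : ℕ} (i : Fin k) (x : Fin k → ℝ) :
    pairStd ((2 : ℝ) • eVec i) x = x i := by
  have : ∀ y : Fin k → ℝ, ∑ l, ((2 : ℝ) • eVec i) l * y l = 2 * y i := by
    intro y
    simp only [Pi.smul_apply, smul_eq_mul, mul_assoc, ← Finset.mul_sum, sum_eVec_mul]
  rw [pairStd, this, this]
  simp only [Pi.smul_apply, smul_eq_mul, eVec_self]
  ring

theorem minu_of_std {R : RootSystemData V} {ι : Type} {parts : ι → Set V} {c : ι} {k : ℕ}
    {Ψ : Set (Fin k → ℝ)} (hiso : factorIso R (PhiFactor R parts c) Ψ) {J : Type} [Fintype J]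
    (r : J → Fin k → ℝ) (hr : ∀ j, r j ∈ Ψ) (κ : ℝ) (g : (Fin k → ℝ) → ℝ)
    (hg : ∀ x ∈ Ψ, κ * ∑ j, pairStd (r j) x = g x)
    (hv : ∀ x ∈ Ψ, g x = -1 ∨ g x = 0 ∨ g x = 1) (hne : ∃ x ∈ Ψ, g x ≠ 0) :
    ∃ f : V →ₗ[ℝ] ℝ, Minu R parts c f := by
  obtain ⟨φ, hφ, hpair⟩ := hiso
  choose r' hr'1 hr'2 using fun j => hφ.surjOn (hr j)
  have key : ∀ β ∈ PhiFactor R parts c, (κ • ∑ j, R.pairing (r' j)) β = g (φ β) := by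
    intro β hβ
    rw [← hg _ (hφ.mapsTo hβ), LinearMap.smul_apply, LinearMap.sum_apply, smul_eq_mul]
    congr 1
    refine Finset.sum_congr rfl fun j _ => ?_
    rw [← hpair _ (hr'1 j) _ hβ, hr'2]
  refine ⟨κ • ∑ j, R.pairing (r' j), ?_, ?_⟩
  · intro β hβ
    rw [key β hβ]
    exact hv _ (hφ.mapsTo hβ)
  · obtain ⟨x, hx, h⟩ := hne
    obtain ⟨β, hβ, rfl⟩ := hφ.surjOn hx
    exact ⟨β, hβ, by rwa [key β hβ]⟩

theorem D_val {m : ℕ} {x : Fin m → ℝ} (hx : x ∈ stdD m) (i : Fin m) :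
    x i = -1 ∨ x i = 0 ∨ x i = 1 := by
  obtain ⟨p, q, hpq, h⟩ := hx
  rcases eVec_cases p i with ⟨h1, h2⟩ | ⟨h1, h2⟩ <;>
  rcases eVec_cases q i with ⟨h3, h4⟩ | ⟨h3, h4⟩ <;>
  first
  | exact absurd (h1.trans h3.symm) hpq
  | (rcases h with rfl | rfl | rfl | rfl <;>
      simp only [Pi.add_apply, Pi.sub_apply, Pi.neg_apply, h2, h4] <;> norm_num)

theorem exists_minu {R : RootSystemData V} {ι : Type} {parts : ι → Set V} {c : ι}
    (hne : (PhiFactor R parts c).Nonempty) (hcl : NoExceptionalFactor R parts) :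
    ∃ f : V →ₗ[ℝ] ℝ, Minu R parts c f := by
  rcases hcl c with ⟨m, h⟩ | ⟨m, h⟩ | ⟨m, h⟩ | ⟨m, h⟩
  · have hΨ : (stdA m).Nonempty := by
      obtain ⟨φ, hφ, _⟩ := h
      exact ⟨_, hφ.mapsTo hne.some_mem⟩
    have hp : ∃ p : Fin (m + 1), p ≠ 0 := by
      obtain ⟨_, p, q, hpq, _⟩ := hΨ
      by_cases hp : p = 0
      · exact ⟨q, fun hq => hpq (hp.trans hq.symm)⟩
      · exact ⟨p, hp⟩
    obtain ⟨p, hp⟩ := hp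
    refine minu_of_std h (fun j : Fin m => eVec 0 - eVec j.succ)
      (fun j => ⟨0, j.succ, (Fin.succ_ne_zero j).symm, rfl⟩) (1 / (m + 1)) (fun x => x 0) ?_ ?_ ?_
    · intro x hx
      have hs : ∑ j, x j = 0 := by
        obtain ⟨p, q, _, rfl⟩ := hx
        simp only [Pi.sub_apply, Finset.sum_sub_distrib, sum_eVec, sub_self]
      rw [Fin.sum_univ_succ] at hs
      simp only [pair_sub (Fin.succ_ne_zero _).symm]
      rw [Finset.sum_sub_distrib, eq_neg_of_add_eq_zero_right hs]
      simp only [Finset.sum_const, Finset.card_univ, Fintype.card_fin, nsmul_eq_mul]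
      have : (m : ℝ) + 1 ≠ 0 := by positivity
      field_simp
      ring
    · rintro x ⟨p, q, hpq, rfl⟩
      exact D_val ⟨p, q, hpq, Or.inr (Or.inl rfl)⟩ 0
    · exact ⟨_, ⟨0, p, hp.symm, rfl⟩, by simp [eVec_self, eVec_ne hp]⟩
  · have hi : ∃ _i : Fin m, True := by
      obtain ⟨φ, hφ, _⟩ := h
      rcases hφ.mapsTo hne.some_mem with ⟨i, _⟩ | ⟨i, _⟩ <;> exact ⟨i, trivial⟩
    obtain ⟨i, -⟩ := hi
    refine minu_of_std h (fun _ : Unit => eVec i) (fun _ => Or.inr ⟨i, Or.inl rfl⟩) (1 / 2)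
      (fun x => x i) ?_ ?_ ?_
    · intro x _
      simp only [pair_one, Finset.sum_const, Finset.card_univ, Fintype.card_unit, one_smul]
      ring
    · rintro x (hx | ⟨p, hx⟩)
      · exact D_val hx i
      · rcases eVec_cases p i with ⟨-, h⟩ | ⟨-, h⟩ <;> rcases hx with rfl | rfl <;> simp [h]
    · exact ⟨eVec i, Or.inr ⟨i, Or.inl rfl⟩, by simp [eVec_self]⟩
  · have hi : ∃ _i : Fin m, True := by
      obtain ⟨φ, hφ, _⟩ := h
      rcases hφ.mapsTo hne.some_mem with ⟨i, _⟩ | ⟨i, _⟩ <;> exact ⟨i, trivial⟩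
    obtain ⟨i, -⟩ := hi
    refine minu_of_std h (fun j : Fin m => (2 : ℝ) • eVec j) (fun j => Or.inr ⟨j, Or.inl rfl⟩)
      (1 / 2) (fun x => 1 / 2 * ∑ j, x j) ?_ ?_ ?_
    · intro x _
      simp only [pair_two]
    · rintro x (⟨p, q, hpq, hx⟩ | ⟨p, hx⟩)
      · rcases hx with rfl | rfl | rfl | rfl <;>
        simp only [Pi.add_apply, Pi.sub_apply, Pi.neg_apply, Finset.sum_add_distrib,
          Finset.sum_sub_distrib, Finset.sum_neg_distrib, sum_eVec] <;> norm_num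
      · rcases hx with rfl | rfl <;>
        simp only [Pi.neg_apply, Pi.smul_apply, smul_eq_mul, Finset.sum_neg_distrib,
          ← Finset.mul_sum, sum_eVec] <;> norm_num
    · refine ⟨(2 : ℝ) • eVec i, Or.inr ⟨i, Or.inl rfl⟩, ?_⟩
      simp only [Pi.smul_apply, smul_eq_mul, ← Finset.mul_sum, sum_eVec]
      norm_num
  · have hi : ∃ i j : Fin m, i ≠ j := by
      obtain ⟨φ, hφ, _⟩ := h
      obtain ⟨i, j, hij, _⟩ := hφ.mapsTo hne.some_mem
      exact ⟨i, j, hij⟩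
    obtain ⟨i, j, hij⟩ := hi
    refine minu_of_std h (fun b : Bool => if b then eVec i + eVec j else eVec i - eVec j) ?_ (1 / 2)
      (fun x => x i) ?_ ?_ ?_
    · intro b
      cases b
      · exact ⟨i, j, hij, Or.inr (Or.inl rfl)⟩
      · exact ⟨i, j, hij, Or.inl rfl⟩
    · intro x _
      rw [Fintype.sum_bool]
      simp only [if_true, Bool.false_eq_true, if_false, pair_add hij, pair_sub hij]
      ring
    · intro x hx
      exact D_val hx i
    · exact ⟨_, ⟨i, j, hij, Or.inl rfl⟩, by simp [eVec_self, eVec_ne hij.symm]⟩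

/-- The sum over `w ∈ T` of the functionals `v ∘ w⁻¹`. -/
noncomputable def FF (v : V →ₗ[ℝ] ℝ) (T : Finset (V ≃ₗ[ℝ] V)) : V →ₗ[ℝ] ℝ :=
  ∑ w ∈ T, v.comp (w⁻¹ : V ≃ₗ[ℝ] V).toLinearMap

theorem FF_apply (v : V →ₗ[ℝ] ℝ) (T : Finset (V ≃ₗ[ℝ] V)) (x : V) :
    FF v T x = ∑ w ∈ T, v (w⁻¹ x) := by
  simp [FF]

theorem FF_inv (v : V →ₗ[ℝ] ℝ) (T : Finset (V ≃ₗ[ℝ] V)) {u : V ≃ₗ[ℝ] V}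
    (hu : ∀ w ∈ T, u * w ∈ T) (hu' : ∀ w ∈ T, u⁻¹ * w ∈ T) (x : V) :
    FF v T (u⁻¹ x) = FF v T x := by
  rw [FF_apply, FF_apply]
  refine Finset.sum_bij' (fun w _ => u * w) (fun w _ => u⁻¹ * w) hu hu' ?_ ?_ ?_
  · intro w _; simp
  · intro w _; simp
  · intro w _; rw [mul_inv_rev]; rfl

theorem FF_simple {R : RootSystemData V} {Pos Δ : Set V} (hB : IsBase R Pos Δ)
    {v : V →ₗ[ℝ] ℝ} (hv : ∀ β ∈ Pos, 0 < v β) {T : Finset (V ≃ₗ[ℝ] V)}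
    (hTW : ∀ w ∈ T, w ∈ weylGroup R)
    (hup : ∀ w ∈ T, ∀ a ∈ Δ, w⁻¹ a ∈ Pos → R.refl a * w ∈ T) {a : V} (ha : a ∈ Δ) :
    FF v T a ≤ 0 ∧ (FF v T a = 0 → ∀ w ∈ T, R.refl a * w ∈ T) := by
  have haP := simple_mem hB ha
  have h0 : ∑ w ∈ T with R.refl a * w ∈ T, v (w⁻¹ a) = 0 := by
    have hneg : ∑ w ∈ T with R.refl a * w ∈ T, v (w⁻¹ a) =
        ∑ w ∈ T with R.refl a * w ∈ T, -v (w⁻¹ a) := by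
      refine Finset.sum_bij' (fun w _ => R.refl a * w) (fun w _ => R.refl a * w) ?_ ?_ ?_ ?_ ?_
      · intro w hw
        rw [Finset.mem_filter] at hw ⊢
        rw [← mul_assoc, refl_mul_self R haP, one_mul]
        exact hw.symm
      · intro w hw
        rw [Finset.mem_filter] at hw ⊢
        rw [← mul_assoc, refl_mul_self R haP, one_mul]
        exact hw.symm
      · intro w _; rw [← mul_assoc, refl_mul_self R haP, one_mul]
      · intro w _; rw [← mul_assoc, refl_mul_self R haP, one_mul]
      · intro w _
        rw [mul_inv_rev, refl_inv R haP, LinearEquiv.mul_apply, refl_self R haP, map_neg,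
          map_neg, neg_neg]
    rw [Finset.sum_neg_distrib] at hneg
    linarith
  have h1 : ∀ w ∈ T, R.refl a * w ∉ T → v (w⁻¹ a) < 0 := by
    intro w hw hn
    rcases hB.mem_or_neg _ (weyl_mem R (inv_mem (hTW w hw)) a haP) with h | h
    · exact absurd (hup w hw a ha h) hn
    · have := hv _ h
      rw [map_neg] at this
      linarith
  have h2 : FF v T a = ∑ w ∈ T with ¬ R.refl a * w ∈ T, v (w⁻¹ a) := by
    rw [FF_apply, ← Finset.sum_filter_add_sum_filter_not T (fun w => R.refl a * w ∈ T), h0,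
      zero_add]
  constructor
  · rw [h2]
    exact Finset.sum_nonpos fun w hw => by
      rw [Finset.mem_filter] at hw
      exact (h1 w hw.1 hw.2).le
  · intro h w hw
    by_contra hn
    have : FF v T a < 0 := by
      rw [h2]
      refine Finset.sum_neg (fun w hw => ?_) ⟨w, Finset.mem_filter.2 ⟨hw, hn⟩⟩
      rw [Finset.mem_filter] at hw
      exact h1 w hw.1 hw.2
    linarith

theorem Wsub_factor {R : RootSystemData V} {Pos Δ : Set V} (hB : IsBase R Pos Δ)
    {ι : Type} {parts : ι → Set V} (hp : IsFactorDecomp R Δ parts) {c : ι} {a : V}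
    {f : V →ₗ[ℝ] ℝ} (hf : ∀ b ∈ Δ, f b = if b = a then 1 else 0) {w : V ≃ₗ[ℝ] V}
    (hw : w ∈ WsubJ R (parts c \ {a})) :
    ∀ β ∈ PhiFactor R parts c, w β ∈ PhiFactor R parts c ∧ f (w β) = f β := by
  have key : ∀ b ∈ parts c \ {a}, ∀ β ∈ PhiFactor R parts c,
      R.refl b β ∈ PhiFactor R parts c ∧ f (R.refl b β) = f β := by
    intro b hb β hβ
    refine ⟨refl_mem_factor hB hp hb.1 hβ, ?_⟩
    have hbD := parts_sub hp c hb.1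
    rw [refl_apply' R (simple_mem hB hbD), map_sub, map_smul, hf b hbD, if_neg (show ¬ b = a from hb.2)]
    simp
  unfold WsubJ at hw
  induction hw using Subgroup.closure_induction_left with
  | one => intro β hβ; exact ⟨hβ, rfl⟩
  | mul_left x hx y hy ih =>
    obtain ⟨b, hb, rfl⟩ := hx
    intro β hβ
    obtain ⟨h1, h2⟩ := ih β hβ
    obtain ⟨h3, h4⟩ := key b hb _ h1
    exact ⟨h3, h4.trans h2⟩
  | inv_mul_cancel x hx y hy ih =>
    obtain ⟨b, hb, rfl⟩ := hx
    intro β hβ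
    rw [refl_inv R (simple_mem hB (parts_sub hp c hb.1))]
    obtain ⟨h1, h2⟩ := ih β hβ
    obtain ⟨h3, h4⟩ := key b hb _ h1
    exact ⟨h3, h4.trans h2⟩

theorem closed_all {R : RootSystemData V} {Pos Δ : Set V} (hB : IsBase R Pos Δ)
    {ι : Type} {parts : ι → Set V} (hp : IsFactorDecomp R Δ parts)
    {hr : ι → V} {hco : ι → (V →₀ ℕ)} (hhr : IsHighestRootData R Pos parts hr hco)
    (hcl : NoExceptionalFactor R parts) {T : Finset (V ≃ₗ[ℝ] V)}
    (hTW : ∀ w ∈ T, w ∈ weylGroup R)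
    (hup : ∀ w ∈ T, ∀ a ∈ Δ, w⁻¹ a ∈ Pos → R.refl a * w ∈ T)
    (hΩ : ∀ w ∈ T, ∀ u ∈ WOmega R Δ parts hco, u * w ∈ T) {b : V} (hb : b ∈ Δ) :
    ∀ w ∈ T, R.refl b * w ∈ T := by
  obtain ⟨c, hbc⟩ : ∃ c, b ∈ parts c := by
    rw [← hp.union_eq] at hb; exact Set.mem_iUnion.1 hb
  obtain ⟨v, hv⟩ := exists_functional hB (fun _ => 1)
  have hvpos : ∀ β ∈ Pos, 0 < v β := fun β hβ =>
    pos_pos hB (fun a ha => by rw [hv a ha]; norm_num) hβ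
  have hS := fun {a : V} (ha : a ∈ Δ) => FF_simple hB hvpos hTW hup ha
  -- positive roots have nonpositive value, negative roots nonnegative value
  have hFpos : ∀ β ∈ Pos, FF v T β ≤ 0 := by
    intro β hβ
    have := pos_nonneg hB (f := -FF v T) (fun a ha => by
      rw [LinearMap.neg_apply]; linarith [(hS ha).1]) hβ
    rw [LinearMap.neg_apply] at this
    linarith
  obtain ⟨f, hf⟩ := exists_minu ⟨b, simple_mem_factor hB hp hbc⟩ hcl
  obtain ⟨a, ha, hco1⟩ := exists_coef_one hB hp hhr hf
  obtain ⟨ε, hε⟩ := exists_functional hB (fun x => if x = a then 1 else 0)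
  have hL1 := longest_spec hB (J := parts c \ {a}) (Set.sdiff_subset.trans (parts_sub hp c))
  have hL2 := longest_spec hB (J := parts c) (parts_sub hp c)
  set w1 := longestElt R Δ (WsubJ R (parts c \ {a})) with hw1
  set w2 := longestElt R Δ (WsubJ R (parts c)) with hw2
  have hu : w1 * w2 ∈ WOmega R Δ parts hco :=
    Subgroup.subset_closure (Set.mem_iUnion.2 ⟨c, Or.inr ⟨a, ha, hco1, rfl⟩⟩)
  obtain ⟨hγ1, hγ2⟩ := Wsub_factor hB hp hε (inv_mem hL1.1) (hr c) (hhr.mem_factor c)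
  set γ := w1⁻¹ (hr c) with hγ
  have hεγ : ε γ = 1 := by
    rw [hγ2, hhr.coeff_eq c, coef_nat hε _ ((hhr.coeff_supp c).trans (parts_sub hp c)), hco1]
    norm_num
  have hγpos : γ ∈ Pos := by
    rcases hB.mem_or_neg _ hγ1.1 with h | h
    · exact h
    · have := pos_nonneg hB (f := ε) (fun x hx => by rw [hε x hx]; split_ifs <;> norm_num) h
      rw [map_neg, hεγ] at this
      norm_num at this
  have h1 : 0 ≤ FF v T (hr c) := by
    rw [← FF_inv v T (u := w1 * w2) (fun w hw => hΩ w hw _ hu)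
      (fun w hw => hΩ w hw _ (inv_mem hu)), mul_inv_rev, LinearEquiv.mul_apply, ← hγ]
    obtain ⟨_, q, hq, hγq⟩ := hγ1
    have hexp : FF v T (w2⁻¹ γ) = ∑ x ∈ q.support, (q x : ℝ) * FF v T (w2⁻¹ x) := by
      conv_lhs => rw [hγq]
      exact eval_int ((FF v T).comp (w2⁻¹ : V ≃ₗ[ℝ] V).toLinearMap) q
    rw [hexp]
    refine Finset.sum_nonneg fun x hx => mul_nonneg ?_ ?_
    · obtain ⟨εx, hεx⟩ := exists_functional hB (fun y => if y = x then 1 else 0)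
      rw [← coef_int hεx q (hq.trans (parts_sub hp c)), ← hγq]
      exact pos_nonneg hB (fun y hy => by rw [hεx y hy]; split_ifs <;> norm_num) hγpos
    · have := hFpos _ (longest_neg hB (parts_sub hp c) hL2 (hq hx))
      rw [map_neg] at this
      linarith
  have hterm : ∀ x ∈ (hco c).support, (hco c x : ℝ) * FF v T x ≤ 0 := fun x hx =>
    mul_nonpos_of_nonneg_of_nonpos (Nat.cast_nonneg _)
      (hS (parts_sub hp c (hhr.coeff_supp c hx))).1
  have hbpos := coef_pos hB hp hhr hbc
  have hbs : b ∈ (hco c).support := by rw [Finsupp.mem_support_iff]; omega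
  rw [hhr.coeff_eq c, eval_nat] at h1
  have h2 := (Finset.sum_eq_zero_iff_of_nonpos hterm).1 (le_antisymm (Finset.sum_nonpos hterm) h1)
    b hbs
  refine (hS hb).2 ?_
  rcases mul_eq_zero.1 h2 with h | h
  · have : hco c b = 0 := by exact_mod_cast h
    omega
  · exact h

theorem Omega_le {R : RootSystemData V} {Pos Δ : Set V} (hB : IsBase R Pos Δ)
    {ι : Type} {parts : ι → Set V} (hp : IsFactorDecomp R Δ parts) (hco : ι → (V →₀ ℕ)) :
    WOmega R Δ parts hco ≤ WsubJ R Δ := by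
  unfold WOmega
  rw [Subgroup.closure_le]
  intro u hu
  obtain ⟨c, hc⟩ := Set.mem_iUnion.1 hu
  rcases hc with rfl | ⟨a, ha, _, rfl⟩
  · exact one_mem _
  · have hs : parts c \ {a} ⊆ Δ := Set.sdiff_subset.trans (parts_sub hp c)
    exact mul_mem (Wsub_mono hs (longest_spec hB hs).1)
      (Wsub_mono (parts_sub hp c) (longest_spec hB (parts_sub hp c)).1)

theorem wD_mem {R : RootSystemData V} {Pos Δ : Set V} (hB : IsBase R Pos Δ)
    {wD : V ≃ₗ[ℝ] V} (hwD : IsLongestIn R Δ (weylGroup R) wD) : wD ∈ WsubJ R Δ := by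
  rcases Δ.eq_empty_or_nonempty with he | ⟨a, ha⟩
  · have hΦ : R.Phi = ∅ := by
      rw [Set.eq_empty_iff_forall_notMem]
      have hP : ∀ β, β ∉ Pos := by
        intro β hβ
        have := pos_pos hB (f := 0) (by simp [he]) hβ
        simp at this
      intro β hβ
      rcases hB.mem_or_neg β hβ with h | h <;> exact hP _ h
    have h1 := hwD.1
    unfold weylGroup at h1
    rw [hΦ, ← he] at h1
    exact h1
  · have h1 : (1 : V ≃ₗ[ℝ] V)⁻¹ a ∈ Pos := by simpa using hB.delta_sub ha
    have h2 := len_lt_of_pos hB (one_mem _) ha h1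
    have h3 := hwD.2 (R.refl a * 1) (mul_mem (Subgroup.subset_closure ⟨a, simple_mem hB ha, rfl⟩)
      (one_mem _))
    have h4 : len R Δ wD ≠ 0 := by omega
    have h5 := Nat.nonempty_of_pos_sInf (Nat.pos_of_ne_zero h4)
    obtain ⟨_, ls, _, hls, rfl⟩ := h5
    exact Subgroup.list_prod_mem _ fun x hx => Subgroup.subset_closure (hls x hx)

theorem ltJ_step {R : RootSystemData V} {Pos Δ : Set V} (hB : IsBase R Pos Δ)
    {w : V ≃ₗ[ℝ] V} (hw : w ∈ WsubJ R Δ) {a : V} (ha : a ∈ Δ) (h : w⁻¹ a ∈ Pos) :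
    ltJ (refls R Δ) (len R Δ) id w (R.refl a * w) := by
  have h1 : chainElt id (fun _ => R.refl a) w 1 = R.refl a * w := by
    simp [chainElt, chainProd]
  refine ⟨1, le_rfl, fun _ => R.refl a, fun _ _ _ => ⟨a, ha, rfl⟩, ?_, h1⟩
  intro m hm1 hm2
  obtain rfl : m = 1 := le_antisymm hm2 hm1
  rw [h1]
  exact len_lt_of_pos hB hw ha h

/-- `x` can be reached from `wD` by an admissible sequence. -/
def Reach (R : RootSystemData V) (Δ : Set V) {ι : Type} (parts : ι → Set V)
    (hco : ι → (V →₀ ℕ)) (wD x : V ≃ₗ[ℝ] V) : Prop :=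
  ∃ (r : ℕ) (w : ℕ → (V ≃ₗ[ℝ] V)),
      (∀ i, i ≤ r → w i ∈ weylGroup R) ∧
      w 0 = wD ∧ w r = x ∧
      ∀ i, 1 ≤ i → i ≤ r →
        ltJ (refls R Δ) (len R Δ) id (w (i - 1)) (w i) ∨
        ∃ u ∈ WOmega R Δ parts hco, w i = u * w (i - 1)

theorem Reach.step {R : RootSystemData V} {Δ : Set V} {ι : Type} {parts : ι → Set V}
    {hco : ι → (V →₀ ℕ)} {wD x y : V ≃ₗ[ℝ] V} (h : Reach R Δ parts hco wD x)
    (hy : y ∈ weylGroup R)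
    (hxy : ltJ (refls R Δ) (len R Δ) id x y ∨ ∃ u ∈ WOmega R Δ parts hco, y = u * x) :
    Reach R Δ parts hco wD y := by
  obtain ⟨r, w, h1, h2, h3, h4⟩ := h
  refine ⟨r + 1, fun i => if i ≤ r then w i else y, ?_, ?_, ?_, ?_⟩
  · intro i _
    dsimp only
    split_ifs with hi
    · exact h1 i hi
    · exact hy
  · simpa using h2
  · simp
  · intro i hi1 hi2
    dsimp only
    rw [if_pos (by omega : i - 1 ≤ r)]
    split_ifs with hi
    · exact h4 i hi1 hi
    · have : i - 1 = r := by omega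
      rw [this, h3]
      exact hxy

end Aux


/-- If every irreducible factor of `Φ` is of type `A`, `B`, `C` or `D`,
then there is a sequence `w_Δ = w_0, w_1, …, w_r = 1` in `W` such that at each step
either `w_{i−1} <_∅ w_i` in the weak left order, or `w_i = u w_{i−1}` for some
`u ∈ W_Ω`. -/
theorem statement_8 {V : Type} [AddCommGroup V] [Module ℝ V]
    (R : RootSystemData V) (Pos Δ : Set V) (hBase : IsBase R Pos Δ)
    {ι : Type} [Fintype ι] (parts : ι → Set V)
    (hparts : IsFactorDecomp R Δ parts)
    (hr : ι → V) (hco : ι → (V →₀ ℕ))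
    (hhr : IsHighestRootData R Pos parts hr hco)
    (wD : V ≃ₗ[ℝ] V) (hwD : IsLongestIn R Δ (weylGroup R) wD)
    (hclassical : NoExceptionalFactor R parts) :
    ∃ (r : ℕ) (w : ℕ → (V ≃ₗ[ℝ] V)),
      (∀ i, i ≤ r → w i ∈ weylGroup R) ∧
      w 0 = wD ∧ w r = 1 ∧
      ∀ i, 1 ≤ i → i ≤ r →
        ltJ (refls R Δ) (len R Δ) id (w (i - 1)) (w i) ∨
        ∃ u ∈ WOmega R Δ parts hco, w i = u * w (i - 1) := by
  have hwS := wD_mem hBase hwD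
  have hle : WsubJ R Δ ≤ weylGroup R := Wsub_le_weyl hBase le_rfl
  let TS : Set (V ≃ₗ[ℝ] V) := {x | x ∈ WsubJ R Δ ∧ Reach R Δ parts hco wD x}
  have hfin : TS.Finite := (weyl_finite R).subset fun x hx => hle hx.1
  have hmem : ∀ x, x ∈ hfin.toFinset ↔ x ∈ WsubJ R Δ ∧ Reach R Δ parts hco wD x := by
    intro x; rw [Set.Finite.mem_toFinset]; rfl
  have hclosed : ∀ b ∈ Δ, ∀ w ∈ hfin.toFinset, R.refl b * w ∈ hfin.toFinset := by
    intro b hb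
    refine closed_all hBase hparts hhr hclassical ?_ ?_ ?_ hb
    · intro w hw
      exact hle ((hmem w).1 hw).1
    · intro w hw a ha h
      obtain ⟨h1, h2⟩ := (hmem w).1 hw
      have h3 := mul_mem (refl_mem_Wsub ha) h1
      exact (hmem _).2 ⟨h3, h2.step (hle h3) (Or.inl (ltJ_step hBase h1 ha h))⟩
    · intro w hw u hu
      obtain ⟨h1, h2⟩ := (hmem w).1 hw
      have h3 := mul_mem (Omega_le hBase hparts hco hu) h1
      exact (hmem _).2 ⟨h3, h2.step (hle h3) (Or.inr ⟨u, hu, rfl⟩)⟩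
  have hall : ∀ g ∈ WsubJ R Δ, g * wD ∈ hfin.toFinset := by
    intro g hg
    unfold WsubJ at hg
    induction hg using Subgroup.closure_induction_left with
    | one =>
      rw [one_mul, hmem]
      refine ⟨hwS, 0, fun _ => wD, fun _ _ => hle hwS, rfl, rfl, ?_⟩
      intro i h1 h2
      omega
    | mul_left x hx y hy ih =>
      obtain ⟨b, hb, rfl⟩ := hx
      rw [mul_assoc]
      exact hclosed b hb _ ih
    | inv_mul_cancel x hx y hy ih =>
      obtain ⟨b, hb, rfl⟩ := hx
      rw [mul_assoc, refl_inv R (simple_mem hBase hb)]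
      exact hclosed b hb _ ih
  have h1 := hall wD⁻¹ (inv_mem hwS)
  rw [inv_mul_cancel] at h1
  exact ((hmem 1).1 h1).2

end PaperSp
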